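/- Let P be a coconnected finite ordered set of width w ≥ 3 such that no element of P is fixed by every automorphism of P, and let k be a rank such that α(R_k) ≥ (w−1)!. Then Aut(P) acts transitively on R_k and |R_k| = w. -/

import Mathlib

/-!
Let `R = R_k`. It is an `Aut(P)`-invariant antichain, so `|R| ≤ w`, and `α(R_k)` is at most the
order of the group `H` that `Aut(P)` induces on `R`.

If `|R| = w` and `H` were intransitive, there would be an `H`-invariant `S ⊆ R` with
`2 ≤ |S| ≤ w - 2`, as no orbit is a single point. Then `H` lies in the stabilizer of `S` in
`Sym(R)`, of index `w.choose |S| > w` (`choose_large`, `index_stabilizer_finset`), which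
contradicts `|H| ≥ (w - 1)!`.

If `|R| < w`, the hypothesis forces `|R| = n := w - 1` and `H = Sym(R)`; this is impossible.
Call an equivariant injection `R → P` a *copy* of `R`; its image is an orbit with `n` points.
Suppose `x` lies in the image of a copy `e` and `y` is incomparable to `x`, outside that image.
Since the orbit of `y` has at least two points and antichains have at most `n + 1`, `y` is
comparable to some point of the image of `e`. So one of `{r | e r < y}`, `{r | y < e r}` is a
nonempty proper subset `V` of `R`; its `n.choose |V|` translates all come from the orbit of `y`,
which has at most `n + 1` points, so `V` or its complement is a single point `q`. The stabilizer
of `y` is contained in that of `q`, and the orbit has fewer than `2 * n` points, so the stabilizers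
agree and `y` lies in the image of a copy, too (`isCopy_step`). As `P` is coconnected, its
incomparability graph is connected (`CoconnectedP.reflTransGen`), so `P` is partitioned into copies
of `R`. The order between two of these copies is `Sym(R)`-invariant, hence determined by what it
does on and off the diagonal of `R × R`, and the two copies are not completely incomparable. An
elementary case analysis shows that an antichain in such a `P` cannot have `n + 1` elements
(`no_large_antichain`): two of them would have the same `R`-coordinate, and there is no room for a
third.
-/

/-- `lowSet α k` is the set of elements of rank `< k`:
`lowSet α 0 = ∅` and `lowSet α (k+1)` adds the minimal elements of the complement. -/
def lowSet (α : Type*) [PartialOrder α] : ℕ → Set α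
  | 0 => ∅
  | k + 1 => lowSet α k ∪ {x | x ∉ lowSet α k ∧ ∀ y, y < x → y ∈ lowSet α k}

/-- `rankSet α k` is the set `R_k` of elements of rank `k`: the minimal elements
of the complement of the set of elements of rank `< k`. -/
def rankSet (α : Type*) [PartialOrder α] (k : ℕ) : Set α :=
  {x | x ∉ lowSet α k ∧ ∀ y, y < x → y ∈ lowSet α k}

/-- `α(R_k)`: the number of distinct restrictions of automorphisms to `R_k`. -/
noncomputable def alphaRank (α : Type*) [PartialOrder α] (k : ℕ) : ℕ :=
  Set.ncard {g : ↥(rankSet α k) → α | ∃ Φ : α ≃o α, ∀ x : ↥(rankSet α k), g x = Φ x.1}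

/-- The ordered set has width `w`: there is an antichain with `w` elements and
every antichain has at most `w` elements. -/
def HasWidthP (α : Type*) [PartialOrder α] (w : ℕ) : Prop :=
  (∃ s : Set α, IsAntichain (· ≤ ·) s ∧ s.ncard = w) ∧
    ∀ s : Set α, IsAntichain (· ≤ ·) s → s.ncard ≤ w

/-- Coconnected: no partition `P = B ∪ T` with nonempty `B`, `T` and `B < T`. -/
def CoconnectedP (α : Type*) [PartialOrder α] : Prop :=
  ¬ ∃ B T : Set α, B.Nonempty ∧ T.Nonempty ∧ Disjoint B T ∧ B ∪ T = Set.univ ∧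
    ∀ b ∈ B, ∀ t ∈ T, b < t

/-- No element is fixed by all automorphisms. -/
def NoCommonFixedPoint (α : Type*) [PartialOrder α] : Prop :=
  ¬ ∃ p : α, ∀ Φ : α ≃o α, Φ p = p

/-- Max-locked (the basic width `≥ 3` definition). -/
def MaxLockedBase (α : Type*) [PartialOrder α] : Prop :=
  CoconnectedP α ∧ NoCommonFixedPoint α ∧
    ((∃ w, HasWidthP α w ∧ 3 ≤ w ∧ w ≠ 4 ∧ ∃ k, Nat.factorial (w - 1) ≤ alphaRank α k) ∨
      (HasWidthP α 4 ∧ ∃ k, 8 < alphaRank α k))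

/-- Max-locked, including the width-2 convention. -/
def MaxLockedFull (α : Type*) [PartialOrder α] : Prop :=
  MaxLockedBase α ∨ (CoconnectedP α ∧ HasWidthP α 2 ∧ Nat.card (α ≃o α) = 2)

/-- Order-autonomous set. -/
def OrdAutonomous (α : Type*) [PartialOrder α] (S : Set α) : Prop :=
  S.Nonempty ∧ ∀ z ∉ S,
    ((∃ a ∈ S, z < a) → ∀ a ∈ S, z < a) ∧ ((∃ a ∈ S, a < z) → ∀ a ∈ S, a < z)

/-- `β` is order-isomorphic to the standard example `S_k`. -/
def IsoSW (β : Type*) [PartialOrder β] (k : ℕ) : Prop :=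
  ∃ e : β ≃ Fin k × Bool, ∀ x y : β,
    x ≤ y ↔ (e x = e y ∨ ((e x).2 = false ∧ (e y).2 = true ∧ (e x).1 ≠ (e y).1))

/-- `β` is order-isomorphic to `kC_2`, a disjoint union of `k` two-element chains. -/
def IsoKC2 (β : Type*) [PartialOrder β] (k : ℕ) : Prop :=
  ∃ e : β ≃ Fin k × Bool, ∀ x y : β,
    x ≤ y ↔ ((e x).1 = (e y).1 ∧ (e x).2 ≤ (e y).2)

/-- `β` is order-isomorphic to the 8-crown. -/
def IsoC8 (β : Type*) [PartialOrder β] : Prop :=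
  ∃ e : β ≃ Fin 4 × Bool, ∀ x y : β,
    x ≤ y ↔ (e x = e y ∨ ((e x).2 = false ∧ (e y).2 = true ∧
      ((e y).1 = (e x).1 ∨ (e y).1 = (e x).1 + 1)))

/-- Membership in `Aut_𝒟(P)`: every orbit of the cyclic group generated by `Φ`
is contained in some member of the partition `parts`. -/
def memAutD (α : Type*) [PartialOrder α] (parts : Set (Set α)) (Φ : α ≃o α) : Prop :=
  ∀ x : α, ∃ s ∈ parts, ∀ n : ℕ, (⇑Φ)^[n] x ∈ s

/-- The `𝒟`-orbit of a point. -/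
def dOrbit (α : Type*) [PartialOrder α] (parts : Set (Set α)) (x : α) : Set α :=
  {y | ∃ Φ : α ≃o α, memAutD α parts Φ ∧ Φ x = y}

/-- The set of `𝒟`-orbits. -/
def dOrbits (α : Type*) [PartialOrder α] (parts : Set (Set α)) : Set (Set α) :=
  Set.range (dOrbit α parts)

/-- Direct interdependence of two sets: a comparable pair of distinct points and an
incomparable pair. -/
def DirInterdep (α : Type*) [PartialOrder α] (C D : Set α) : Prop :=
  (∃ c ∈ C, ∃ d ∈ D, c ≠ d ∧ (c ≤ d ∨ d ≤ c)) ∧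
    ∃ c ∈ C, ∃ d ∈ D, ¬ c ≤ d ∧ ¬ d ≤ c

/-- `U` is an interdependent `𝒟`-orbit union: the union of the vertices of a connected
component of the orbit graph. -/
def IsIOU (α : Type*) [PartialOrder α] (parts : Set (Set α)) (U : Set α) : Prop :=
  ∃ O ∈ dOrbits α parts, U = ⋃₀ {E | E ∈ dOrbits α parts ∧
    Relation.ReflTransGen
      (fun C D => C ∈ dOrbits α parts ∧ D ∈ dOrbits α parts ∧ DirInterdep α C D) O E}

/-- The `Aut(P)`-orbit of a point. -/
def autOrbit (α : Type*) [PartialOrder α] (x : α) : Set α := {y | ∃ Φ : α ≃o α, Φ x = y}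

/-- The natural orbit structure: the set of `Aut(P)`-orbits. -/
def natOrbits (α : Type*) [PartialOrder α] : Set (Set α) := Set.range (autOrbit α)

/-- `U` is an interdependent orbit union w.r.t. the natural orbit structure. -/
def IsNatIOU (α : Type*) [PartialOrder α] (U : Set α) : Prop :=
  ∃ O ∈ natOrbits α, U = ⋃₀ {E | E ∈ natOrbits α ∧
    Relation.ReflTransGen
      (fun C D => C ∈ natOrbits α ∧ D ∈ natOrbits α ∧ DirInterdep α C D) O E}

/-- Membership in `Aut_{𝒩|U}(U)`: every orbit of the cyclic group generated by `Ψ`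
is contained in some `Aut(P)`-orbit that lies inside `U`. -/
def memAutNatU (α : Type*) [PartialOrder α] (U : Set α) (Ψ : ↥U ≃o ↥U) : Prop :=
  ∀ p : ↥U, ∃ s ∈ natOrbits α, s ⊆ U ∧ ∀ n : ℕ, ((⇑Ψ)^[n] p : α) ∈ s

/-- Without slack: no member of the partition contains a nontrivial order-autonomous
antichain. -/
def WithoutSlackP (α : Type*) [PartialOrder α] (parts : Set (Set α)) : Prop :=
  ∀ s ∈ parts, ¬ ∃ A : Set α, A ⊆ s ∧ OrdAutonomous α A ∧ IsAntichain (· ≤ ·) A ∧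
    A.ncard ≠ 1 ∧ A.ncard ≠ Nat.card α

/-- Tight: without slack, and every member of the partition is a `𝒟`-orbit. -/
def TightP (α : Type*) [PartialOrder α] (parts : Set (Set α)) : Prop :=
  WithoutSlackP α parts ∧ ∀ s ∈ parts, s ∈ dOrbits α parts

/-- `w`-adequately bounded. -/
def AdequatelyBounded (α : Type*) [PartialOrder α] (parts : Set (Set α)) (w : ℕ) : Prop :=
  ∃ (M : ℕ) (ws : Fin M → ℕ), (∀ j, ws j ≤ w - 1) ∧
    Set.ncard {Φ : α ≃o α | memAutD α parts Φ} ≤ ∏ j, Nat.factorial (ws j) ∧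
    ∑ j, ws j ≤ (Nat.card α - Set.ncard parts) / 2

/-- Connectedness of the comparability graph. -/
def PosetConnectedP (α : Type*) [PartialOrder α] : Prop :=
  ∀ x y : α, Relation.ReflTransGen (fun a b : α => a ≤ b ∨ b ≤ a) x y

/-! ### Stabilizers of subsets under the full symmetric group -/

open MulAction
open scoped Pointwise

lemma choose_large (n : ℕ) : ∀ j, 2 ≤ j → j + 2 ≤ n → n + 2 ≤ n.choose j := by
  induction n with
  | zero => intro j h1 h2; omega
  | succ n ih =>
    intro j h1 h2
    obtain ⟨i, rfl⟩ : ∃ i, j = i + 1 := ⟨j - 1, by omega⟩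
    rw [Nat.choose_succ_succ, Nat.succ_eq_add_one]
    rcases Nat.lt_or_ge n 4 with h4 | h4
    · obtain rfl : n = 3 := by omega
      obtain rfl : i = 1 := by omega
      decide
    · by_cases hi : 2 ≤ i
      · have := ih i hi (by omega)
        have : 0 < n.choose (i + 1) := Nat.choose_pos (by omega)
        omega
      · obtain rfl : i = 1 := by omega
        have := ih 2 le_rfl (by omega)
        rw [Nat.choose_one_right]
        change n + 1 + 2 ≤ n + n.choose 2
        omega

/-- If `G` induces the full symmetric group on `X`, it permutes the subsets of a given size
transitively. -/
lemma index_stabilizer_finset {G X : Type*} [Group G] [MulAction G X] [Fintype X] [DecidableEq X]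
    (hfull : ∀ σ : Equiv.Perm X, ∃ g : G, ∀ x, g • x = σ x) (S : Finset X) :
    (stabilizer G S).index = (Fintype.card X).choose S.card := by
  rw [index_stabilizer, ← Finset.card_univ, ← Finset.card_powersetCard, ← Set.ncard_coe_finset]
  congr 1
  ext T
  simp only [Finset.mem_coe, Finset.mem_powersetCard_univ, mem_orbit_iff]
  constructor
  · rintro ⟨g, rfl⟩
    simp [Finset.card_smul_finset]
  · intro hT
    have := Set.powersetCard.isPretransitive (α := X) (n := S.card)
    obtain ⟨σ, hσ⟩ := exists_smul_eq (Equiv.Perm X) (⟨S, rfl⟩ : Set.powersetCard X S.card) ⟨T, hT⟩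
    obtain ⟨g, hg⟩ := hfull σ
    refine ⟨g, ?_⟩
    have h2 : σ • S = T := congrArg Subtype.val hσ
    rw [← h2]
    ext x
    simp [Finset.mem_smul_finset, hg]

/-! ### Orbits and copies of an `Aut(P)`-set -/

lemma smul_lt_smul_aut {α : Type*} [PartialOrder α]
    (g : α ≃o α) (a b : α) : g • a < g • b ↔ a < b := g.lt_iff_lt

/-- An automorphism preserves the number of elements strictly below a point. -/
lemma not_lt_smul {α : Type*} [Fintype α] [PartialOrder α]
    (g : α ≃o α) (a : α) : ¬ a < g • a := by
  classical
  intro h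
  have h1 : (Set.Iio a).ncard < (Set.Iio (g • a)).ncard :=
    Set.ncard_lt_ncard
      (Set.ssubset_iff_exists.2 ⟨Set.Iio_subset_Iio h.le, a, h, lt_irrefl a⟩)
  have h2 : Set.Iio (g • a) = Set.image g (Set.Iio a) := (g.image_Iio a).symm
  rw [h2, Set.ncard_image_of_injective _ g.injective] at h1
  exact lt_irrefl _ h1

lemma not_lt_of_mem_orbit {α : Type*} [Fintype α] [PartialOrder α]
    {a b : α} (h : b ∈ orbit (α ≃o α) a) : ¬ a < b := by
  obtain ⟨g, rfl⟩ := h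
  exact not_lt_smul g a

lemma isAntichain_orbit {α : Type*} [Fintype α] [PartialOrder α]
    (a : α) : IsAntichain (· ≤ ·) (orbit (α ≃o α) a) := by
  intro b hb c hc hne hle
  refine not_lt_of_mem_orbit ?_ (lt_of_le_of_ne hle hne)
  rw [← orbit_eq_iff.2 hb] at hc
  exact hc

/-- Two distinct orbits with at least `n + 2` points together cannot be completely incomparable. -/
lemma exists_lt_or_gt {α : Type*} [Fintype α] [PartialOrder α]
    {n : ℕ} (hwidth : ∀ s : Set α, IsAntichain (· ≤ ·) s → s.ncard ≤ n + 1)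
    {a b : α} (hab : b ∉ orbit (α ≃o α) a) (ha : n ≤ (orbit (α ≃o α) a).ncard)
    (hb : 2 ≤ (orbit (α ≃o α) b).ncard) : ∃ u ∈ orbit (α ≃o α) a, u < b ∨ b < u := by
  by_contra! hcon
  have key : ∀ u ∈ orbit (α ≃o α) a, ∀ v ∈ orbit (α ≃o α) b, ¬ u < v ∧ ¬ v < u := by
    rintro u hu _ ⟨g, rfl⟩
    have h := hcon (g⁻¹ • u) (mem_orbit_of_mem_orbit g⁻¹ hu)
    have h1 := smul_lt_smul_aut g (g⁻¹ • u) b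
    have h2 := smul_lt_smul_aut g b (g⁻¹ • u)
    simp only [smul_inv_smul] at h1 h2
    exact ⟨fun h' => h.1 (h1.1 h'), fun h' => h.2 (h2.1 h')⟩
  have hdisj : Disjoint (orbit (α ≃o α) a) (orbit (α ≃o α) b) := by
    rw [Set.disjoint_left]
    intro u hu hv
    exact hab (by rw [← orbit_eq_iff.2 hu, orbit_eq_iff.2 hv]; exact mem_orbit_self b)
  have hanti : IsAntichain (· ≤ ·) (orbit (α ≃o α) a ∪ orbit (α ≃o α) b) := by
    rintro u (hu | hu) v (hv | hv) hne hle
    · exact isAntichain_orbit a hu hv hne hle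
    · exact (key u hu v hv).1 (lt_of_le_of_ne hle hne)
    · exact (key v hv u hu).2 (lt_of_le_of_ne hle hne)
    · exact isAntichain_orbit b hu hv hne hle
  have := hwidth _ hanti
  rw [Set.ncard_union_eq hdisj] at this
  omega

/-- `e` embeds the `Aut(P)`-set `X` equivariantly in the ordered set; in the application `X` is the
rank `R_k`, and the image of `e` is an orbit. -/
def IsCopy {α X : Type*} [PartialOrder α] [MulAction (α ≃o α) X]
    (e : X → α) : Prop :=
  (∀ (g : α ≃o α) (x : X), e (g • x) = g • e x) ∧ Function.Injective e

/-- The copy is `g • q ↦ g • y`. -/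
lemma exists_isCopy_of_stabilizer_eq {α X : Type*} [PartialOrder α] [MulAction (α ≃o α) X]
    [IsPretransitive (α ≃o α) X] {q : X} {y : α}
    (h : stabilizer (α ≃o α) q = stabilizer (α ≃o α) y) : ∃ e : X → α, IsCopy e ∧ e q = y := by
  choose t ht using fun x : X => exists_smul_eq (α ≃o α) q x
  have key : ∀ g g' : α ≃o α, g • q = g' • q ↔ g • y = g' • y := by
    intro g g'
    have h1 : g'⁻¹ * g ∈ stabilizer (α ≃o α) q ↔ g'⁻¹ * g ∈ stabilizer (α ≃o α) y := by rw [h]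
    simpa only [mem_stabilizer_iff, mul_smul, inv_smul_eq_iff] using h1
  refine ⟨fun x => t x • y, ⟨fun g x => ?_, fun x x' hx => ?_⟩, ?_⟩
  · change t (g • x) • y = g • t x • y
    rw [← mul_smul, ← key, mul_smul, ht, ht]
  · have := (key _ _).2 hx
    rwa [ht, ht] at this
  · have := (key (t q) 1).1 (by rw [ht, one_smul])
    simpa using this

lemma isPretransitive_of_full {α X : Type*} [PartialOrder α] [MulAction (α ≃o α) X]
    (hfull : ∀ σ : Equiv.Perm X, ∃ g : α ≃o α, ∀ x, g • x = σ x)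
    : IsPretransitive (α ≃o α) X := by
  classical
  refine ⟨fun x y => ?_⟩
  obtain ⟨g, hg⟩ := hfull (Equiv.swap x y)
  exact ⟨g, by simp [hg]⟩

/-- If an invariant relation (in the applications, `<` or `>`) distinguishes points of a copy as seen
from `y`, and the orbit of `y` is small, then the orbit of `y` is a copy as well. -/
lemma exists_isCopy_of_invariant {α X : Type*} [Fintype α] [PartialOrder α] [Fintype X]
    [MulAction (α ≃o α) X]
    (hfull : ∀ σ : Equiv.Perm X, ∃ g : α ≃o α, ∀ x, g • x = σ x)
    {n : ℕ} (hn : 2 ≤ n) (hX : Fintype.card X = n)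
    (R : α → α → Prop) (hR : ∀ (g : α ≃o α) a b, R (g • a) (g • b) ↔ R a b)
    {e : X → α} (he : IsCopy e) {y : α} (hy : (orbit (α ≃o α) y).ncard ≤ n + 1)
    {x₁ x₂ : X} (h₁ : R (e x₁) y) (h₂ : ¬ R (e x₂) y) :
    ∃ f : X → α, IsCopy f ∧ ∃ q, f q = y := by
  classical
  have := isPretransitive_of_full hfull
  set V : Finset X := Finset.univ.filter fun x => R (e x) y with hV
  have hyV : ∀ g ∈ stabilizer (α ≃o α) y, ∀ x, g • x ∈ V ↔ x ∈ V := by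
    intro g hg x
    have h := hR g (e x) y
    rw [mem_stabilizer_iff.1 hg] at h
    simp only [hV, Finset.mem_filter, Finset.mem_univ, true_and, he.1, h]
  have hpos : (stabilizer (α ≃o α) y).index ≠ 0 := by
    rw [index_stabilizer, ← Nat.pos_iff_ne_zero, Set.ncard_pos]
    exact ⟨y, mem_orbit_self y⟩
  have hle : stabilizer (α ≃o α) y ≤ stabilizer (α ≃o α) V := by
    intro g hg
    rw [mem_stabilizer_iff]
    ext x
    rw [← Finset.inv_smul_mem_iff, hyV _ (inv_mem hg)]
  have hchoose : n.choose V.card ≤ n + 1 := by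
    rw [← hX, ← index_stabilizer_finset hfull V, hX]
    refine le_trans (Nat.le_of_dvd (Nat.pos_of_ne_zero hpos) (Subgroup.index_dvd_of_le hle)) ?_
    rwa [index_stabilizer]
  have hV0 : 0 < V.card := Finset.card_pos.2 ⟨x₁, by simpa [hV] using h₁⟩
  have hVn : 0 < Vᶜ.card := Finset.card_pos.2 ⟨x₂, by simpa [hV] using h₂⟩
  have hVc : V.card + Vᶜ.card = n := by rw [Finset.card_add_card_compl, hX]
  have hcases : V.card = 1 ∨ Vᶜ.card = 1 := by
    by_contra! hcon
    have := choose_large n V.card (by omega) (by omega)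
    omega
  obtain ⟨q, hq⟩ : ∃ q, stabilizer (α ≃o α) y ≤ stabilizer (α ≃o α) q := by
    rcases hcases with h | h
    · obtain ⟨q, hq⟩ := Finset.card_eq_one.1 h
      refine ⟨q, fun g hg => ?_⟩
      have := (hyV g hg q).2 (by simp [hq])
      simpa [hq] using this
    · obtain ⟨q, hq⟩ := Finset.card_eq_one.1 h
      have hmem : ∀ x, x ∉ V ↔ x = q := fun x => by
        rw [← Finset.mem_compl, hq, Finset.mem_singleton]
      refine ⟨q, fun g hg => ?_⟩
      exact (hmem _).1 fun h' => (hmem q).2 rfl ((hyV g hg q).1 h')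
  have hidx : (stabilizer (α ≃o α) q).index = n := by
    rw [index_stabilizer_of_transitive, Nat.card_eq_fintype_card, hX]
  have hmul := Subgroup.relIndex_mul_index hq
  rw [hidx] at hmul
  have hone : (stabilizer (α ≃o α) y).relIndex (stabilizer (α ≃o α) q) = 1 := by
    have h0 : (stabilizer (α ≃o α) y).relIndex (stabilizer (α ≃o α) q) ≠ 0 := by
      intro h0; rw [h0, zero_mul] at hmul; exact hpos hmul.symm
    by_contra h1
    have h2 : 2 ≤ (stabilizer (α ≃o α) y).relIndex (stabilizer (α ≃o α) q) := by omega
    have h3 := Nat.mul_le_mul_right n h2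
    rw [hmul, index_stabilizer] at h3
    omega
  obtain ⟨f, hf, hfq⟩ :=
    exists_isCopy_of_stabilizer_eq (le_antisymm (Subgroup.relIndex_eq_one.1 hone) hq)
  exact ⟨f, hf, q, hfq⟩

lemma IsCopy.range_eq_orbit {α X : Type*} [PartialOrder α] [MulAction (α ≃o α) X]
    [IsPretransitive (α ≃o α) X] {e : X → α} (he : IsCopy e) (x : X) :
    Set.range e = orbit (α ≃o α) (e x) := by
  ext y
  constructor
  · rintro ⟨x', rfl⟩
    obtain ⟨g, rfl⟩ := exists_smul_eq (α ≃o α) x x'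
    exact ⟨g, (he.1 g x).symm⟩
  · rintro ⟨g, rfl⟩
    exact ⟨g • x, he.1 g x⟩

lemma IsCopy.ncard_orbit {α X : Type*} [PartialOrder α] [Fintype X] [MulAction (α ≃o α) X]
    [IsPretransitive (α ≃o α) X] {e : X → α} (he : IsCopy e) (x : X) :
    (orbit (α ≃o α) (e x)).ncard = Fintype.card X := by
  rw [← he.range_eq_orbit x, ← Set.image_univ, Set.ncard_image_of_injective _ he.2, Set.ncard_univ,
    Nat.card_eq_fintype_card]

lemma two_le_ncard_orbit {α : Type*} [Fintype α] [PartialOrder α]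
    (hnofix : NoCommonFixedPoint α) (y : α) :
    2 ≤ (orbit (α ≃o α) y).ncard := by
  by_contra! hlt
  refine hnofix ⟨y, fun Φ => ?_⟩
  have := (Set.ncard_le_one (Set.toFinite _)).1 (Nat.lt_succ_iff.1 hlt)
  exact this (Φ y) ⟨Φ, rfl⟩ y (mem_orbit_self y)

/-- Lying in a copy propagates along incomparability. -/
lemma isCopy_step {α X : Type*} [Fintype α] [PartialOrder α] [Fintype X] [MulAction (α ≃o α) X]
    (hfull : ∀ σ : Equiv.Perm X, ∃ g : α ≃o α, ∀ x, g • x = σ x)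
    {n : ℕ} (hn : 2 ≤ n) (hX : Fintype.card X = n)
    (hwidth : ∀ s : Set α, IsAntichain (· ≤ ·) s → s.ncard ≤ n + 1)
    (hnofix : NoCommonFixedPoint α)
    {x y : α} (hx : ∃ f : X → α, IsCopy f ∧ ∃ q, f q = x) (hxy : ¬ x < y) (hyx : ¬ y < x) :
    ∃ f : X → α, IsCopy f ∧ ∃ q, f q = y := by
  have := isPretransitive_of_full hfull
  obtain ⟨e, he, p, rfl⟩ := hx
  have hy := hwidth _ (isAntichain_orbit y)
  by_cases hmem : y ∈ orbit (α ≃o α) (e p)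
  · rw [← he.range_eq_orbit] at hmem
    exact ⟨e, he, hmem⟩
  · obtain ⟨u, hu, hlt⟩ := exists_lt_or_gt hwidth hmem (by rw [he.ncard_orbit, hX])
      (two_le_ncard_orbit hnofix y)
    rw [← he.range_eq_orbit] at hu
    obtain ⟨x', rfl⟩ := hu
    rcases hlt with hlt | hlt
    · exact exists_isCopy_of_invariant hfull hn hX (fun a b => a < b)
        (fun g a b => smul_lt_smul_aut g a b) he hy hlt hxy
    · exact exists_isCopy_of_invariant hfull hn hX (fun a b => b < a)
        (fun g a b => smul_lt_smul_aut g b a) he hy hlt hyx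

/-! ### Connectedness of the incomparability graph -/

/-- In a coconnected ordered set any two points are joined by a path of successively incomparable (or
equal) points: everything outside the component `C` of `o` lies entirely above or entirely below
`C`. -/
lemma CoconnectedP.reflTransGen {α : Type*} [PartialOrder α]
    (hcoco : CoconnectedP α) (o y : α) :
    Relation.ReflTransGen (fun a b : α => ¬ a < b ∧ ¬ b < a) o y := by
  set r := fun a b : α => ¬ a < b ∧ ¬ b < a with hr
  set C : Set α := {c | Relation.ReflTransGen r o c} with hC
  have hoC : o ∈ C := Relation.ReflTransGen.refl
  have hcomp : ∀ c ∈ C, ∀ z ∉ C, c < z ∨ z < c := by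
    intro c hc z hz
    by_contra! hcon
    exact hz (Relation.ReflTransGen.tail hc hcon)
  have hbelow : ∀ z ∉ C, z < o → ∀ c ∈ C, z < c := by
    intro z hz hzo c hc
    induction hc with
    | refl => exact hzo
    | @tail b c hb hbc ih =>
      rcases hcomp c (hb.tail hbc) z hz with h | h
      · exact absurd (h.trans ih) hbc.2
      · exact h
  have habove : ∀ z ∉ C, o < z → ∀ c ∈ C, c < z := by
    intro z hz hzo c hc
    induction hc with
    | refl => exact hzo
    | @tail b c hb hbc ih =>
      rcases hcomp c (hb.tail hbc) z hz with h | h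
      · exact h
      · exact absurd (ih.trans h) hbc.1
  by_contra hy
  have hyC : y ∉ C := hy
  by_cases hB : ∃ z, z ∉ C ∧ z < o
  · obtain ⟨z, hz⟩ := hB
    refine hcoco ⟨{z | z ∉ C ∧ z < o}, {z | z ∉ C ∧ z < o}ᶜ, ⟨z, hz⟩, ⟨o, fun h => h.1 hoC⟩,
      disjoint_compl_right, Set.union_compl_self _, ?_⟩
    rintro b ⟨hb, hbo⟩ t ht
    by_cases htC : t ∈ C
    · exact hbelow b hb hbo t htC
    · rcases hcomp o hoC t htC with h | h
      · exact hbo.trans h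
      · exact absurd ⟨htC, h⟩ ht
  · refine hcoco ⟨C, Cᶜ, ⟨o, hoC⟩, ⟨y, hyC⟩, disjoint_compl_right, Set.union_compl_self _, ?_⟩
    intro b hb t ht
    rcases hcomp o hoC t ht with h | h
    · exact habove t ht h b hb
    · exact absurd ⟨t, ht, h⟩ hB

/-! ### Antichains in an ordered set made of copies -/

/-- Every point of `e` is below the point of `f` with the same coordinate. -/
def DiagLt {α X : Type*} [PartialOrder α]
    (e f : X → α) : Prop := ∀ x, e x < f x

/-- Every point of `e` is below all points of `f` with a different coordinate. -/
def OffDiagLt {α X : Type*} [PartialOrder α]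
    (e f : X → α) : Prop := ∀ x y, x ≠ y → e x < f y

lemma IsCopy.diagLt {α X : Type*} [PartialOrder α] [MulAction (α ≃o α) X]
    (hfull : ∀ σ : Equiv.Perm X, ∃ g : α ≃o α, ∀ x, g • x = σ x)
    {e f : X → α} (he : IsCopy e) (hf : IsCopy f) {x : X} (h : e x < f x) :
    DiagLt e f := by
  have := isPretransitive_of_full hfull
  intro y
  obtain ⟨g, rfl⟩ := exists_smul_eq (α ≃o α) x y
  rwa [he.1, hf.1, smul_lt_smul_aut]

lemma IsCopy.offDiagLt {α X : Type*} [PartialOrder α] [MulAction (α ≃o α) X]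
    (hfull : ∀ σ : Equiv.Perm X, ∃ g : α ≃o α, ∀ x, g • x = σ x)
    {e f : X → α} (he : IsCopy e) (hf : IsCopy f) {x y : X} (hxy : x ≠ y)
    (h : e x < f y) : OffDiagLt e f := by
  classical
  intro x' y' hxy'
  obtain ⟨σ, hσx, hσy⟩ : ∃ σ : Equiv.Perm X, σ x = x' ∧ σ y = y' := by
    refine ⟨Equiv.swap (Equiv.swap x x' y) y' * Equiv.swap x x', ?_, by simp⟩
    rw [Equiv.Perm.mul_apply, Equiv.swap_apply_left]
    refine Equiv.swap_apply_of_ne_of_ne ?_ hxy'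
    intro h'
    apply hxy
    have := congrArg (Equiv.swap x x') h'
    simpa using this
  obtain ⟨g, hg⟩ := hfull σ
  rw [← hσx, ← hσy, ← hg, ← hg, he.1, hf.1, smul_lt_smul_aut]
  exact h

/-- An ordered set all of whose points lie in copies of `X` has no antichain with `|X| + 1` points. -/
lemma no_large_antichain {α X : Type*} [Fintype α] [PartialOrder α] [Fintype X] [MulAction (α ≃o α) X]
    (hfull : ∀ σ : Equiv.Perm X, ∃ g : α ≃o α, ∀ x, g • x = σ x)
    {n : ℕ} (hn : 2 ≤ n) (hX : Fintype.card X = n)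
    (hwidth : ∀ s : Set α, IsAntichain (· ≤ ·) s → s.ncard ≤ n + 1)
    (hgood : ∀ y : α, ∃ f : X → α, IsCopy f ∧ ∃ q, f q = y)
    {A : Set α} (hA : IsAntichain (· ≤ ·) A) (hcard : A.ncard = n + 1) : False := by
  classical
  have := isPretransitive_of_full hfull
  -- One copy `E a` is fixed for each orbit (not merely for each point), so that coordinates `p` of
  -- points in the same orbit refer to the same copy; for `|X| = 2` an orbit is a copy in two ways.
  obtain ⟨E, hE, hEorb, p, hp⟩ : ∃ E : α → X → α, (∀ a, IsCopy (E a)) ∧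
      (∀ a b, orbit (α ≃o α) a = orbit (α ≃o α) b → E a = E b) ∧
      ∃ p : α → X, ∀ a, E a (p a) = a := by
    have hex : ∀ i : orbitRel.Quotient (α ≃o α) α, ∃ e : X → α, IsCopy e ∧
        ∃ q, e q = i.out := fun i => hgood _
    choose e he q hq using hex
    have hsurj : ∀ a : α, ∃ x, e (Quotient.mk'' a) x = a := by
      intro a
      have : a ∈ Set.range (e (Quotient.mk'' a)) := by
        rw [(he _).range_eq_orbit (q _), hq]
        have h2 : (orbitRel (α ≃o α) α) a (Quotient.out (Quotient.mk'' a)) :=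
          Setoid.symm' _ (Quotient.mk_out (s := orbitRel (α ≃o α) α) a)
        exact orbitRel_apply.1 h2
      exact this
    choose p hp using hsurj
    refine ⟨fun a => e (Quotient.mk'' a), fun a => he _, fun a b hab => ?_, p, hp⟩
    have : (Quotient.mk'' a : orbitRel.Quotient (α ≃o α) α) = Quotient.mk'' b :=
      Quotient.sound' (orbitRel_apply.2 (orbit_eq_iff.1 hab))
    simp only [this]
  -- Different orbits are comparable along the diagonal or off it.
  have hcomp : ∀ a b, orbit (α ≃o α) a ≠ orbit (α ≃o α) b →
      (DiagLt (E a) (E b) ∨ DiagLt (E b) (E a)) ∨ OffDiagLt (E a) (E b) ∨ OffDiagLt (E b) (E a) := by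
    intro a b hab
    have hna : n ≤ (orbit (α ≃o α) a).ncard := by rw [← hp a, (hE a).ncard_orbit, hX]
    have hnb : 2 ≤ (orbit (α ≃o α) b).ncard := by rw [← hp b, (hE b).ncard_orbit, hX]; exact hn
    obtain ⟨u, hu, hlt⟩ := exists_lt_or_gt hwidth
      (fun h => hab (orbit_eq_iff.2 h).symm) hna hnb
    rw [← hp a, ← (hE a).range_eq_orbit] at hu
    obtain ⟨x, rfl⟩ := hu
    rw [← hp b] at hlt
    by_cases hx : x = p b
    · rw [hx] at hlt
      exact Or.inl (hlt.imp ((hE a).diagLt hfull (hE b)) ((hE b).diagLt hfull (hE a)))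
    · exact Or.inr (hlt.imp ((hE a).offDiagLt hfull (hE b) hx)
        ((hE b).offDiagLt hfull (hE a) (Ne.symm hx)))
  have hnlt : ∀ a ∈ A, ∀ b ∈ A, ¬ E a (p a) < E b (p b) := by
    intro a ha b hb h
    rw [hp, hp] at h
    exact hA ha hb h.ne h.le
  have hoff : ∀ a ∈ A, ∀ b ∈ A, orbit (α ≃o α) a ≠ orbit (α ≃o α) b → p a = p b →
      OffDiagLt (E a) (E b) ∨ OffDiagLt (E b) (E a) := by
    intro a ha b hb hab hpab
    refine (hcomp a b hab).resolve_left ?_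
    rintro (h | h)
    · have := h (p a); nth_rw 2 [hpab] at this; exact hnlt a ha b hb this
    · have := h (p a); nth_rw 1 [hpab] at this; exact hnlt b hb a ha this
  have hdiag : ∀ a ∈ A, ∀ b ∈ A, orbit (α ≃o α) a ≠ orbit (α ≃o α) b → p a ≠ p b →
      DiagLt (E a) (E b) ∨ DiagLt (E b) (E a) := by
    intro a ha b hb hab hpab
    refine (hcomp a b hab).resolve_right ?_
    rintro (h | h)
    · exact hnlt a ha b hb (h _ _ hpab)
    · exact hnlt b hb a ha (h _ _ hpab.symm)
  have hpeq : ∀ a b, orbit (α ≃o α) a = orbit (α ≃o α) b → p a = p b → a = b := by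
    intro a b hab hpab
    rw [← hp a, ← hp b, hEorb a b hab, hpab]
  -- There are more points in `A` than coordinates.
  obtain ⟨a₀, ha₀, b₀, hb₀, hne₀, hp₀⟩ : ∃ a ∈ A, ∃ b ∈ A, a ≠ b ∧ p a = p b := by
    have := Set.exists_ne_map_eq_of_ncard_lt_of_maps_to (s := A) (t := (Set.univ : Set X)) (f := p)
      (by rw [Set.ncard_univ, Nat.card_eq_fintype_card, hX, hcard]; omega) (fun _ _ => trivial)
    simpa using this
  obtain ⟨a, ha, b, hb, hne, hpab, hab⟩ : ∃ a ∈ A, ∃ b ∈ A, a ≠ b ∧ p a = p b ∧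
      OffDiagLt (E a) (E b) := by
    rcases hoff a₀ ha₀ b₀ hb₀ (fun h => hne₀ (hpeq _ _ h hp₀)) hp₀ with h | h
    · exact ⟨a₀, ha₀, b₀, hb₀, hne₀, hp₀, h⟩
    · exact ⟨b₀, hb₀, a₀, ha₀, hne₀.symm, hp₀.symm, h⟩
  obtain ⟨c, hc, hcab⟩ : ∃ c ∈ A, c ∉ ({a, b} : Set α) := by
    refine Set.exists_mem_notMem_of_ncard_lt_ncard ?_ (Set.toFinite _)
    rw [Set.ncard_pair hne, hcard]
    omega
  simp only [Set.mem_insert_iff, Set.mem_singleton_iff, not_or] at hcab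
  have hnab := hnlt a ha b hb
  have hncb := hnlt c hc b hb
  have hnac := hnlt a ha c hc
  have hnbc := hnlt b hb c hc
  have hnca := hnlt c hc a ha
  obtain ⟨r, hr⟩ : ∃ r, r ≠ p a := by
    have : Nontrivial X := Fintype.one_lt_card_iff_nontrivial.1 (by omega)
    exact exists_ne _
  by_cases hca : orbit (α ≃o α) c = orbit (α ≃o α) a
  · have hpc : p c ≠ p a := fun h => hcab.1 (hpeq _ _ hca h)
    rw [hEorb c a hca] at hncb
    exact hncb (hab _ _ (hpab ▸ hpc))
  by_cases hcb : orbit (α ≃o α) c = orbit (α ≃o α) b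
  · have hpc : p c ≠ p b := fun h => hcab.2 (hpeq _ _ hcb h)
    rw [hEorb c b hcb] at hnac
    exact hnac (hab _ _ (hpab ▸ hpc.symm))
  by_cases hpc : p c = p a
  · rw [hpc] at hncb hnac hnbc hnca
    rw [← hpab] at hnab hncb hnbc
    rcases hoff c hc a ha hca hpc with h | h
    · exact hncb ((h _ _ hr.symm).trans (hab _ _ hr))
    · rcases hoff c hc b hb hcb (hpc.trans hpab) with h' | h'
      · exact hnab ((h _ _ hr.symm).trans (h' _ _ hr))
      · exact hnac ((hab _ _ hr.symm).trans (h' _ _ hr))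
  · rw [← hpab] at hnab hncb hnbc
    rcases hdiag c hc a ha hca hpc with h | h
    · exact hncb ((h _).trans (hab _ _ hpc))
    · rcases hdiag c hc b hb hcb (hpab ▸ hpc) with h' | h'
      · exact hnab ((h _).trans (h' _))
      · exact hnac ((hab _ _ (Ne.symm hpc)).trans (h' _))

/-! ### Ranks as `Aut(P)`-sets -/

section Rank

variable {α : Type*} [PartialOrder α]

lemma smul_mem_lowSet (g : α ≃o α) (k : ℕ) : ∀ x, g • x ∈ lowSet α k ↔ x ∈ lowSet α k := by
  induction k with
  | zero => intro x; simp [lowSet]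
  | succ k ih =>
    intro x
    have h : (∀ y, y < g • x → y ∈ lowSet α k) ↔ ∀ y, y < x → y ∈ lowSet α k := by
      constructor
      · intro h y hy
        exact (ih y).1 (h _ ((smul_lt_smul_aut g y x).2 hy))
      · intro h y hy
        have h1 := (smul_lt_smul_aut g (g⁻¹ • y) x).1 (by rwa [smul_inv_smul])
        have h2 := (ih _).2 (h _ h1)
        rwa [smul_inv_smul] at h2
    simp only [lowSet, Set.mem_union, Set.mem_ofPred_eq, ih, h]

lemma smul_mem_rankSet (g : α ≃o α) (k : ℕ) {x : α} (hx : x ∈ rankSet α k) :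
    g • x ∈ rankSet α k := by
  refine ⟨fun h => hx.1 ((smul_mem_lowSet g k x).1 h), fun y hy => ?_⟩
  have h1 := (smul_lt_smul_aut g (g⁻¹ • y) x).1 (by rwa [smul_inv_smul])
  have h2 := (smul_mem_lowSet g k _).2 (hx.2 _ h1)
  rwa [smul_inv_smul] at h2

lemma isAntichain_rankSet (k : ℕ) : IsAntichain (· ≤ ·) (rankSet α k) := by
  intro x hx y hy hne hle
  exact hx.1 (hy.2 x (lt_of_le_of_ne hle hne))

/-- The rank `R_k` as an `Aut(P)`-set. -/
def rankAction (α : Type*) [PartialOrder α] (k : ℕ) : SubMulAction (α ≃o α) α where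
  carrier := rankSet α k
  smul_mem' g _ hx := smul_mem_rankSet g k hx

/-- `α(R_k)` is at most (in fact equal to) the order of the permutation group induced on `R_k`. -/
lemma alphaRank_le [Fintype α] (k : ℕ) :
    alphaRank α k ≤ Nat.card (toPermHom (α ≃o α) (rankAction α k)).range := by
  classical
  have hsub : {g : ↥(rankSet α k) → α | ∃ Φ : α ≃o α, ∀ x : ↥(rankSet α k), g x = Φ x.1} ⊆
      Set.range fun (σ : (toPermHom (α ≃o α) (rankAction α k)).range) (x : ↥(rankSet α k)) =>
        ((σ : Equiv.Perm (rankAction α k)) ⟨x.1, x.2⟩ : α) := by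
    rintro g ⟨Φ, hΦ⟩
    refine ⟨⟨_, Φ, rfl⟩, ?_⟩
    funext x
    rw [hΦ]
    rfl
  refine (Set.ncard_le_ncard hsub (Set.toFinite _)).trans ?_
  rw [← Set.image_univ, ← Set.ncard_univ]
  exact Set.ncard_image_le (Set.toFinite _)

end Rank

theorem stmt5 {α : Type*} [Fintype α] [PartialOrder α] (w : ℕ) (hw : 3 ≤ w)
    (hcoco : CoconnectedP α) (hwidth : HasWidthP α w) (hnofix : NoCommonFixedPoint α)
    (k : ℕ) (hk : Nat.factorial (w - 1) ≤ alphaRank α k) :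
    (∀ x ∈ rankSet α k, ∀ y ∈ rankSet α k, ∃ Φ : α ≃o α, Φ x = y) ∧
    (rankSet α k).ncard = w := by 
  classical
  let X := rankAction α k
  let H := (toPermHom (α ≃o α) X).range
  have : Fintype X := Fintype.ofFinite X
  have hXcard : Fintype.card X = (rankSet α k).ncard := by
    rw [← Nat.card_eq_fintype_card]
    rfl
  have hH : Nat.factorial (w - 1) ≤ Nat.card H := hk.trans (alphaRank_le k)
  have hle : (rankSet α k).ncard ≤ w := hwidth.2 _ (isAntichain_rankSet k)
  have hperm : Nat.card (Equiv.Perm X) = (rankSet α k).ncard.factorial := by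
    rw [Nat.card_perm, Nat.card_eq_fintype_card, hXcard]
  have hdvd : Nat.card H ∣ Nat.card (Equiv.Perm X) := Subgroup.card_subgroup_dvd_card H
  have hHle : Nat.card H ≤ (rankSet α k).ncard.factorial := by
    rw [← hperm]; exact Nat.le_of_dvd Nat.card_pos hdvd
  -- Otherwise `|R_k| = w - 1` and every permutation of `R_k` is induced by an automorphism.
  have hcard : (rankSet α k).ncard = w := by
    by_contra hne
    have hn1 : (rankSet α k).ncard = w - 1 := by
      by_contra hne1
      have hlt : (rankSet α k).ncard < w - 1 := by omega
      have h1 : (rankSet α k).ncard.factorial ≤ (w - 2).factorial :=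
        Nat.factorial_le (by omega)
      have h2 : (w - 2).factorial < (w - 1).factorial :=
        (Nat.factorial_lt (by omega)).2 (by omega)
      omega
    have htop : H = ⊤ := by
      apply Subgroup.eq_top_of_le_card
      rw [hperm, hn1]
      exact hH
    have hfull : ∀ σ : Equiv.Perm X, ∃ g : α ≃o α, ∀ x, g • x = σ x := by
      intro σ
      have hσ : σ ∈ H := by rw [htop]; trivial
      obtain ⟨g, rfl⟩ := hσ
      exact ⟨g, fun x => rfl⟩
    obtain ⟨n, rfl⟩ : ∃ n, w = n + 1 := ⟨w - 1, by omega⟩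
    have hX : Fintype.card X = n := by rw [hXcard, hn1]; rfl
    obtain ⟨o⟩ : Nonempty X := Fintype.card_pos_iff.1 (by omega)
    have hgood : ∀ y : α, ∃ f : X → α, IsCopy f ∧ ∃ q, f q = y := by
      intro y
      induction hcoco.reflTransGen (o : α) y with
      | refl => exact ⟨Subtype.val, ⟨fun _ _ => rfl, Subtype.val_injective⟩, o, rfl⟩
      | tail _ hbc ih =>
        exact isCopy_step hfull (by omega) hX hwidth.2 hnofix ih hbc.1 hbc.2
    obtain ⟨A, hA, hAcard⟩ := hwidth.1
    exact no_large_antichain hfull (by omega) hX hwidth.2 hgood hA hAcard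
  refine ⟨fun x hx y hy => ?_, hcard⟩
  by_contra hxy
  -- The orbit of `x` and its complement in `R_k` both have at least two points.
  let S : Finset X := Finset.univ.filter fun z => (z : α) ∈ orbit (α ≃o α) x
  have hS2 : ∀ z : α, z ∈ rankSet α k → ∀ T : Finset X,
      (∀ u : X, (u : α) ∈ orbit (α ≃o α) z → u ∈ T) → 2 ≤ T.card := by
    intro z hz T hT
    refine (two_le_ncard_orbit hnofix z).trans ?_
    have hsub : orbit (α ≃o α) z ⊆ Set.image Subtype.val (T : Set X) := by
      rintro _ ⟨g, rfl⟩
      exact ⟨⟨g • z, smul_mem_rankSet g k hz⟩, hT _ ⟨g, rfl⟩, rfl⟩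
    refine (Set.ncard_le_ncard hsub (Set.toFinite _)).trans ?_
    rw [← Set.ncard_coe_finset]
    exact Set.ncard_image_le (Set.toFinite _)
  have hS : 2 ≤ S.card := hS2 x hx S fun u hu => by simpa [S] using hu
  have hSc : 2 ≤ Sᶜ.card := hS2 y hy Sᶜ fun u hu => by
    simp only [S, Finset.mem_compl, Finset.mem_filter, Finset.mem_univ, true_and]
    intro hu'
    have h : y ∈ orbit (α ≃o α) x := by
      rw [← orbit_eq_iff.2 hu', orbit_eq_iff.2 hu]
      exact mem_orbit_self y
    obtain ⟨g, hg⟩ := h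
    exact hxy ⟨g, hg⟩
  have hSsum : S.card + Sᶜ.card = w := by rw [Finset.card_add_card_compl, hXcard, hcard]
  have hHS : H ≤ stabilizer (Equiv.Perm X) S := by
    rintro _ ⟨g, rfl⟩
    have hmem : ∀ (g : α ≃o α) (z : X), g • z ∈ S ↔ z ∈ S := by
      intro g z
      simp only [S, Finset.mem_filter, Finset.mem_univ, true_and, SubMulAction.val_smul]
      rw [← orbit_eq_iff, ← orbit_eq_iff, orbit_smul]
    rw [mem_stabilizer_iff]
    ext z
    rw [← Finset.inv_smul_mem_iff, ← map_inv]
    exact hmem g⁻¹ z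
  have hidx := index_stabilizer_finset (G := Equiv.Perm X) (X := X) (fun σ => ⟨σ, fun _ => rfl⟩) S
  have hmul := Subgroup.card_mul_index (stabilizer (Equiv.Perm X) S)
  have hHS' : Nat.card H ≤ Nat.card (stabilizer (Equiv.Perm X) S) := Subgroup.card_le_of_le hHS
  rw [hidx, hperm, hXcard, hcard] at hmul
  have hbig := choose_large w S.card hS (by omega)
  have hwf : w.factorial = (w - 1).factorial * w := by
    rw [mul_comm, Nat.mul_factorial_pred (by omega)]
  have h1 : (w - 1).factorial * (w + 2) ≤ (w - 1).factorial * w := by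
    rw [← hwf, ← hmul]
    exact Nat.mul_le_mul (hH.trans hHS') hbig
  have h2 := Nat.le_of_mul_le_mul_left h1 (Nat.factorial_pos _)
  omega
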